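/- Let μ = f·Lⁿ ∈ 𝒲(ℝⁿ) be a PS measure with f continuous and f > 0 everywhere, and let a ∈ ℝⁿ. Then the translated measure ν := f̃·Lⁿ with f̃(x) := f(x + a) is also a PS measure. Moreover, if f(x₁,…,x_n) = f₁(x₁)⋯f_n(x_n) with each f_i continuous and f_i > 0, then there exists m ∈ ℝⁿ such that ν := f̃·Lⁿ with f̃(x) = f(x + m) is a PS measure and f̃(x₁,…,x_n) = f̃₁(x₁)⋯f̃_n(x_n) with each f̃_i continuous, strictly positive, and even: f̃_i(−t) = f̃_i(t) for all t ∈ ℝ and all i = 1,…,n. -/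

import Mathlib

/-!
Translations preserve Lebesgue measure, so perimeter and symmetrization are translation equivariant
and PS measures stay PS measures.

For a product density `F₁(x₁) ⋯ Fₙ(xₙ)`, smoothing the indicator of `{x | xᵢ ≥ c}` and integrating
by parts shows that this half-space has perimeter `Fᵢ(c)` times the integrals of the other factors.
Symmetrizing its complement in direction `eᵢ` gives `{x | xᵢ ≥ c'}`, where the upper tail of `Fᵢ` at
`c'` has the mass of its lower tail at `c`; hence the PS inequality says `Fᵢ(c') ≤ Fᵢ(c)`. The map
`σ` taking `c'` to `c` is an involution, so equality holds. Differentiating the equality of tails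
gives `σ' = -1`, so `σ` is the reflection about its fixed point `mᵢ`, the median of `Fᵢ`, and `Fᵢ`
is symmetric about `mᵢ`.
-/

open MeasureTheory Set Filter
open scoped ENNReal RealInnerProductSpace Topology

noncomputable section

/-- Euclidean space ℝⁿ. -/
abbrev En (n : ℕ) := EuclideanSpace ℝ (Fin n)

/-- Divergence of a vector field on ℝⁿ. -/
noncomputable def dvg {n : ℕ} (φ : En n → En n) (x : En n) : ℝ :=
  ∑ i : Fin n, fderiv ℝ φ x (EuclideanSpace.single i 1) i

/-- `f'` is the (weak) gradient of `f`, and both are locally integrable;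
this encodes `f ∈ W^{1,1}_loc(ℝⁿ)` with weak gradient `∇f = f'`. -/
def HasWeakGrad {n : ℕ} (f : En n → ℝ) (f' : En n → En n) : Prop :=
  LocallyIntegrable f volume ∧ LocallyIntegrable f' volume ∧
    ∀ φ : En n → En n, ContDiff ℝ 1 φ → HasCompactSupport φ →
      (∫ x, f x * dvg φ x) = - ∫ x, ⟪φ x, f' x⟫

/-- Membership of `μ = f·Lⁿ` in the class `𝒲(ℝⁿ)`: the density `f` is non-negative,
integrable and lies in `W^{1,1}_loc(ℝⁿ)` with weak gradient `f'`. -/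
def MemW {n : ℕ} (f : En n → ℝ) (f' : En n → En n) : Prop :=
  (∀ x, 0 ≤ f x) ∧ Integrable f volume ∧ HasWeakGrad f f'

/-- Admissible test vector fields: `C¹`, compactly supported in `U`, sup-norm at most 1. -/
def IsTestField {n : ℕ} (U : Set (En n)) (φ : En n → En n) : Prop :=
  ContDiff ℝ 1 φ ∧ HasCompactSupport φ ∧ tsupport φ ⊆ U ∧ ∀ x, ‖φ x‖ ≤ 1

/-- The weighted variation `‖g‖_{BV_μ(U)}` (valued in `ℝ≥0∞`;
membership in `BV_μ(U)` means that this quantity is finite). -/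
noncomputable def bvVar {n : ℕ} (f : En n → ℝ) (f' : En n → En n) (U : Set (En n))
    (g : En n → ℝ) : ℝ≥0∞ :=
  ⨆ (φ : En n → En n) (_ : IsTestField U φ),
    ENNReal.ofReal (∫ x in U, g x * (f x * dvg φ x + ⟪φ x, f' x⟫))

/-- The weighted perimeter `Per_μ(E; U)`. -/
noncomputable def perim {n : ℕ} (f : En n → ℝ) (f' : En n → En n) (U : Set (En n))
    (E : Set (En n)) : ℝ≥0∞ :=
  bvVar f f' U (E.indicator fun _ => (1 : ℝ))

/-- The measure `μ = f·Lⁿ`. -/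
noncomputable def muM {n : ℕ} (f : En n → ℝ) : Measure (En n) :=
  volume.withDensity fun x => ENNReal.ofReal (f x)

/-- One-dimensional generalized Ehrhard symmetrization of `A ⊆ ℝ` in direction `v ∈ {−1,+1}`
with respect to a measure `ν` on `ℝ`: the largest half-line `{t : v·t ≥ c}` of `ν`-measure
`ν A` (with the conventions `∅`, `ℝ` when `c = ±∞`). -/
def ehrhard1D (ν : Measure ℝ) (v : ℝ) (A : Set ℝ) : Set ℝ :=
  {t | ∀ b : ℝ, (∀ c : ℝ, ν {y | c ≤ v * y} ≤ ν A → b ≤ c) → b ≤ v * t}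

/-- The weighted measure `f·H¹` on the fiber `{x + t·v : t ∈ ℝ}`, identified with `ℝ`. -/
noncomputable def fiberMeasure {n : ℕ} (f : En n → ℝ) (x v : En n) : Measure ℝ :=
  (volume : Measure ℝ).withDensity fun t => ENNReal.ofReal (f (x + t • v))

/-- Generalized `v`-Ehrhard symmetrization of `E ⊆ ℝⁿ` with respect to `μ = f·Lⁿ`:
on each fiber over `v^⊥` one replaces `E` by the largest half-line in direction `v`
of the same weighted measure. -/
def ehrhardSymm {n : ℕ} (f : En n → ℝ) (v : En n) (E : Set (En n)) : Set (En n) :=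
  {z | ⟪z, v⟫ ∈
      ehrhard1D (fiberMeasure f (z - ⟪z, v⟫ • v) v) 1
        {t | (z - ⟪z, v⟫ • v) + t • v ∈ E}}

/-- `μ = f·Lⁿ` is a perimeter symmetrization (PS) measure: generalized Ehrhard
symmetrization does not increase the weighted perimeter of sets of finite `μ`-perimeter. -/
def IsPSMeasure {n : ℕ} (f : En n → ℝ) (f' : En n → En n) : Prop :=
  ∀ v : En n, ‖v‖ = 1 → ∀ E : Set (En n), NullMeasurableSet E volume →
    perim f f' univ E < ⊤ →
      perim f f' univ (ehrhardSymm f v E) ≤ perim f f' univ E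

/-- The half-space `H(v, r) = {x : x·v ≥ r}`. -/
def halfSpace {n : ℕ} (v : En n) (r : ℝ) : Set (En n) := {x | r ≤ ⟪x, v⟫}

/-- `H_μ(E, v)`: the largest half-space in direction `v` with `μ`-measure `μ(E)`. -/
def halfSpaceOf {n : ℕ} (f : En n → ℝ) (E : Set (En n)) (v : En n) : Set (En n) :=
  {x | ∀ b : ℝ, (∀ c : ℝ, muM f (halfSpace v c) ≤ muM f E → b ≤ c) → b ≤ ⟪x, v⟫}

/-- `g'` is the weak derivative of `g : ℝ → ℝ` (so `g ∈ W^{1,1}_loc(ℝ)`). -/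
def HasWeakDeriv (g g' : ℝ → ℝ) : Prop :=
  LocallyIntegrable g volume ∧ LocallyIntegrable g' volume ∧
    ∀ φ : ℝ → ℝ, ContDiff ℝ 1 φ → HasCompactSupport φ →
      (∫ t, g t * deriv φ t) = - ∫ t, φ t * g' t

/-! ### Translations -/

section Translation

variable {n : ℕ}

lemma dvg_comp_sub (φ : En n → En n) (a x : En n) :
    dvg (fun y => φ (y - a)) x = dvg φ (x - a) := by
  simp only [dvg, fderiv_comp_sub]

lemma IsTestField.comp_sub {φ : En n → En n} (hφ : IsTestField univ φ) (a : En n) :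
    IsTestField univ (fun y => φ (y - a)) := by
  obtain ⟨hsmooth, hsupp, -, hbound⟩ := hφ
  exact ⟨hsmooth.comp (contDiff_id.sub contDiff_const),
    hsupp.comp_homeomorph (Homeomorph.subRight a), subset_univ _, fun x => hbound _⟩

lemma bvVar_translate_le (f : En n → ℝ) (f' : En n → En n) (g : En n → ℝ) (a : En n) :
    bvVar (fun x => f (x + a)) (fun x => f' (x + a)) univ (fun x => g (x + a)) ≤
      bvVar f f' univ g := by
  refine iSup₂_le fun φ hφ => le_iSup₂_of_le _ (hφ.comp_sub a) (ENNReal.ofReal_le_ofReal ?_)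
  simp only [Measure.restrict_univ, dvg_comp_sub]
  conv_rhs => rw [← integral_add_right_eq_self _ a]
  simp only [add_sub_cancel_right, le_refl]

lemma bvVar_translate (f : En n → ℝ) (f' : En n → En n) (g : En n → ℝ) (a : En n) :
    bvVar (fun x => f (x + a)) (fun x => f' (x + a)) univ (fun x => g (x + a)) =
      bvVar f f' univ g := by
  refine le_antisymm (bvVar_translate_le f f' g a) ?_
  simpa only [neg_add_cancel_right] using
    bvVar_translate_le (fun x => f (x + a)) (fun x => f' (x + a)) (fun x => g (x + a)) (-a)

lemma perim_translate (f : En n → ℝ) (f' : En n → En n) (E : Set (En n)) (a : En n) :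
    perim (fun x => f (x + a)) (fun x => f' (x + a)) univ ((· + a) ⁻¹' E) = perim f f' univ E :=
  bvVar_translate f f' (E.indicator fun _ => (1 : ℝ)) a

lemma ehrhard1D_preimage_add_right (ν : Measure ℝ) (v τ : ℝ) (A : Set ℝ) :
    ehrhard1D ν v ((· + τ) ⁻¹' A) = (· + τ) ⁻¹' ehrhard1D (ν.map (· + τ)) v A := by
  have halfLine (c : ℝ) : (· + τ) ⁻¹' {y | c ≤ v * y} = {y | c - v * τ ≤ v * y} := by
    ext y
    simp only [mem_preimage, mem_ofPred_eq, mul_add, sub_le_iff_le_add]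
  ext t
  simp only [ehrhard1D, mem_preimage, mem_ofPred_eq, (measurableEmbedding_addRight τ).map_apply,
    halfLine]
  refine ⟨fun h b hb => ?_, fun h b hb => ?_⟩
  · have := h (b - v * τ) fun c hc => by
      linarith [hb (c + v * τ) (by simpa only [add_sub_cancel_right] using hc)]
    linarith
  · have := h (b + v * τ) fun c hc => by linarith [hb _ hc]
    linarith

lemma map_add_right_fiberMeasure (f : En n → ℝ) (x v : En n) (τ : ℝ) :
    (fiberMeasure f (x + τ • v) v).map (· + τ) = fiberMeasure f x v := by
  ext S hS
  have hshift := measurableEmbedding_addRight τ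
  have point_eq (t : ℝ) : x + τ • v + t • v = x + (t + τ) • v := by module
  simp only [hshift.map_apply, fiberMeasure, withDensity_apply _ (hshift.measurable hS),
    withDensity_apply _ hS, point_eq]
  exact (measurePreserving_add_right volume τ).setLIntegral_comp_preimage_emb hshift
    (fun t => ENNReal.ofReal (f (x + t • v))) S

lemma ehrhardSymm_translate (f : En n → ℝ) (v a : En n) (E : Set (En n)) :
    ehrhardSymm (fun x => f (x + a)) v ((· + a) ⁻¹' E) = (· + a) ⁻¹' ehrhardSymm f v E := by
  ext z
  have base : z - ⟪z, v⟫ • v + a = z + a - ⟪z + a, v⟫ • v + ⟪a, v⟫ • v := by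
    rw [inner_add_left]; module
  have measure_eq : fiberMeasure (fun x => f (x + a)) (z - ⟪z, v⟫ • v) v =
      fiberMeasure f (z + a - ⟪z + a, v⟫ • v + ⟪a, v⟫ • v) v := by
    simp only [fiberMeasure, add_right_comm _ _ a, base]
  have fiber_eq : {t : ℝ | z - ⟪z, v⟫ • v + t • v ∈ (· + a) ⁻¹' E} =
      (· + ⟪a, v⟫) ⁻¹' {t | z + a - ⟪z + a, v⟫ • v + t • v ∈ E} := by
    ext t
    have point_eq : z - ⟪z, v⟫ • v + t • v + a =
        z + a - ⟪z + a, v⟫ • v + (t + ⟪a, v⟫) • v := by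
      rw [inner_add_left]; module
    simp only [mem_preimage, mem_ofPred_eq, point_eq]
  simp only [ehrhardSymm, mem_ofPred_eq]
  rw [measure_eq, fiber_eq, ehrhard1D_preimage_add_right, map_add_right_fiberMeasure,
    mem_preimage, ← inner_add_left]
  rfl

lemma IsPSMeasure.translate {f : En n → ℝ} {f' : En n → En n} (hPS : IsPSMeasure f f')
    (a : En n) : IsPSMeasure (fun x => f (x + a)) (fun x => f' (x + a)) := by
  intro v hv E hE hfin
  obtain ⟨E, rfl⟩ : ∃ E₀, E = (· + a) ⁻¹' E₀ :=
    ⟨(· - a) ⁻¹' E, by simp only [← preimage_comp, Function.comp_def, add_sub_cancel_right,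
      preimage_id']⟩
  rw [perim_translate] at hfin
  rw [ehrhardSymm_translate, perim_translate, perim_translate]
  refine hPS v hv E ?_ hfin
  simpa only [← preimage_comp, Function.comp_def, sub_add_cancel, preimage_id'] using
    hE.preimage (measurePreserving_sub_right volume a).quasiMeasurePreserving

end Translation

/-! ### Tail-balanced densities on the line -/

section Line

lemma setIntegral_pos_of_forall_pos {α : Type*} [MeasurableSpace α] {μ : Measure α} {g : α → ℝ}
    (hint : Integrable g μ) (hpos : ∀ x, 0 < g x) {s : Set α} (hs : 0 < μ s) :
    0 < ∫ x in s, g x ∂μ := by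
  rw [setIntegral_pos_iff_support_of_nonneg_ae (ae_of_all _ fun x => (hpos x).le) hint.integrableOn,
    Function.support_eq_univ fun x => (hpos x).ne', univ_inter]
  exact hs

lemma integral_pos_of_forall_pos {α : Type*} [MeasurableSpace α] {μ : Measure α} [NeZero μ]
    {g : α → ℝ} (hint : Integrable g μ) (hpos : ∀ x, 0 < g x) : 0 < ∫ x, g x ∂μ := by
  simpa only [Measure.restrict_univ] using
    setIntegral_pos_of_forall_pos hint hpos (Measure.measure_univ_pos.2 (NeZero.ne μ))

variable {g : ℝ → ℝ}

lemma integral_Iic_eq_intervalIntegral_add (hint : Integrable g) (t : ℝ) :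
    ∫ y in Iic t, g y = (∫ y in (0 : ℝ)..t, g y) + ∫ y in Iic 0, g y := by
  rw [← intervalIntegral.integral_Iic_sub_Iic hint.integrableOn hint.integrableOn, sub_add_cancel]

lemma continuous_integral_Iic (hint : Integrable g) : Continuous fun t => ∫ y in Iic t, g y := by
  rw [funext (integral_Iic_eq_intervalIntegral_add hint)]
  exact (intervalIntegral.continuous_primitive (fun _ _ => hint.intervalIntegrable) 0).add_const _

lemma hasDerivAt_integral_Iic (hint : Integrable g) (hg : Continuous g) (x : ℝ) :
    HasDerivAt (fun t => ∫ y in Iic t, g y) (g x) x := by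
  rw [funext (integral_Iic_eq_intervalIntegral_add hint)]
  exact (hg.integral_hasStrictDerivAt 0 x).hasDerivAt.add_const _

lemma strictMono_integral_Iic (hint : Integrable g) (hpos : ∀ t, 0 < g t) :
    StrictMono fun t => ∫ y in Iic t, g y := fun a b hab => by
  rw [← sub_pos, intervalIntegral.integral_Iic_sub_Iic hint.integrableOn hint.integrableOn]
  exact intervalIntegral.intervalIntegral_pos_of_pos hint.intervalIntegrable hpos hab

lemma integral_Ioi_eq_sub (hint : Integrable g) (c : ℝ) :
    ∫ y in Ioi c, g y = (∫ y, g y) - ∫ y in Iic c, g y := by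
  rw [← intervalIntegral.integral_Iic_add_Ioi hint.integrableOn hint.integrableOn,
    add_sub_cancel_left]

lemma integral_Ioi_le_integral_Ioi_iff (hint : Integrable g) (hpos : ∀ t, 0 < g t) {b c : ℝ} :
    ∫ y in Ioi b, g y ≤ ∫ y in Ioi c, g y ↔ c ≤ b := by
  rw [integral_Ioi_eq_sub hint, integral_Ioi_eq_sub hint, sub_le_sub_iff_left]
  exact (strictMono_integral_Iic hint hpos).le_iff_le

lemma exists_integral_Iic_eq (hint : Integrable g) {r : ℝ} (hr₀ : 0 < r) (hr₁ : r < ∫ y, g y) :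
    ∃ c, ∫ y in Iic c, g y = r := by
  have atBot_lt : ∀ᶠ c in atBot, ∫ y in Iic c, g y < r :=
    (tendsto_integral_Iic_zero tendsto_id).eventually_lt_const hr₀
  have lt_atTop : ∀ᶠ c in atTop, r < ∫ y in Iic c, g y :=
    ((aecover_Iic tendsto_id).integral_tendsto_of_countably_generated hint).eventually_const_lt hr₁
  obtain ⟨x, hx⟩ := atBot_lt.exists
  obtain ⟨y, hy⟩ := lt_atTop.exists
  exact mem_range_of_exists_le_of_exists_ge (continuous_integral_Iic hint) ⟨x, hx.le⟩ ⟨y, hy.le⟩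

/-- `σ` is the tail reflection of the density `g`: the lower tail of `g` at `σ c` has the same mass
as its upper tail at `c`. For a positive density this is the decreasing involution fixing the
median. -/
def IsTailReflection (g σ : ℝ → ℝ) : Prop :=
  ∀ c, ∫ y in Iic (σ c), g y = ∫ y in Ioi c, g y

lemma exists_isTailReflection (hint : Integrable g) (hpos : ∀ t, 0 < g t) :
    ∃ σ, IsTailReflection g σ := by
  refine Classical.skolem.1 fun c => exists_integral_Iic_eq hint ?_ ?_
  · exact setIntegral_pos_of_forall_pos hint hpos (Real.volume_Ioi.symm ▸ ENNReal.zero_lt_top)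
  · rw [integral_Ioi_eq_sub hint]
    exact sub_lt_self _
      (setIntegral_pos_of_forall_pos hint hpos (Real.volume_Iic.symm ▸ ENNReal.zero_lt_top))

namespace IsTailReflection

variable {σ : ℝ → ℝ}

lemma integral_Iic_apply (hσ : IsTailReflection g σ) (hint : Integrable g) (c : ℝ) :
    ∫ y in Iic (σ c), g y = (∫ y, g y) - ∫ y in Iic c, g y :=
  (hσ c).trans (integral_Ioi_eq_sub hint c)

lemma involutive (hσ : IsTailReflection g σ) (hint : Integrable g) (hpos : ∀ t, 0 < g t) :
    Function.Involutive σ := fun c => by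
  refine (strictMono_integral_Iic hint hpos).injective ?_
  simp only [hσ.integral_Iic_apply hint, sub_sub_cancel]

lemma antitone (hσ : IsTailReflection g σ) (hint : Integrable g) (hpos : ∀ t, 0 < g t) :
    Antitone σ := fun c d hcd => by
  have hmono := strictMono_integral_Iic hint hpos
  refine hmono.le_iff_le.1 ?_
  simp only [hσ.integral_Iic_apply hint]
  exact sub_le_sub_left (hmono.monotone hcd) _

lemma continuous (hσ : IsTailReflection g σ) (hint : Integrable g) (hpos : ∀ t, 0 < g t) :
    Continuous σ :=
  (hσ.antitone hint hpos).dual_right.continuous_of_surjective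
    (hσ.involutive hint hpos).surjective

lemma hasDerivAt (hσ : IsTailReflection g σ) (hint : Integrable g) (hg : Continuous g)
    (hpos : ∀ t, 0 < g t) (c : ℝ) : HasDerivAt σ (-g c / g (σ c)) c :=
  .of_comp_left (hσ.continuous hint hpos).continuousAt (hasDerivAt_integral_Iic hint hg (σ c))
    ((hasDerivAt_integral_Iic hint hg c).const_sub _) (hpos _).ne'
    (Eventually.of_forall (hσ.integral_Iic_apply hint))

lemma eq_sub_of_invariant (hσ : IsTailReflection g σ) (hint : Integrable g) (hg : Continuous g)
    (hpos : ∀ t, 0 < g t) (hinv : ∀ c, g (σ c) = g c) (c : ℝ) : σ c = σ 0 - c := by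
  have hderiv (c : ℝ) : HasDerivAt (fun x => σ x + x) 0 c := by
    have h := (hσ.hasDerivAt hint hg hpos c).add (hasDerivAt_id c)
    rwa [hinv, neg_div, div_self (hpos c).ne', neg_add_cancel] at h
  have hconst := is_const_of_deriv_eq_zero (fun c => (hderiv c).differentiableAt)
    (fun c => (hderiv c).deriv) c 0
  linarith

end IsTailReflection

lemma exists_symm_of_tail_balanced (hint : Integrable g) (hg : Continuous g) (hpos : ∀ t, 0 < g t)
    (hbal : ∀ c c', ∫ y in Iic c, g y = ∫ y in Ioi c', g y → g c' ≤ g c) :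
    ∃ m, ∀ t, g (-t + m) = g (t + m) := by
  obtain ⟨σ, hσ⟩ := exists_isTailReflection hint hpos
  have hinv (c : ℝ) : g (σ c) = g c := by
    refine le_antisymm ?_ (hbal _ _ (hσ c))
    simpa only [hσ.involutive hint hpos c] using hbal _ _ (hσ (σ c))
  refine ⟨σ 0 / 2, fun t => ?_⟩
  rw [← hinv (t + σ 0 / 2), hσ.eq_sub_of_invariant hint hg hpos hinv (t + σ 0 / 2)]
  congr 1
  ring

end Line

/-! ### The weighted divergence -/

section WeightedDiv

variable {n : ℕ} {f : En n → ℝ} {f' : En n → En n} {φ : En n → En n} {ψ : En n → ℝ}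

lemma dvg_neg (φ : En n → En n) (x : En n) : dvg (fun y => -φ y) x = -dvg φ x := by
  simp only [dvg, fderiv_fun_neg, neg_apply, PiLp.neg_apply,
    Finset.sum_neg_distrib]

lemma sum_apply_single_mul (L : En n →L[ℝ] ℝ) (w : En n) :
    ∑ i, L (EuclideanSpace.single i 1) * w i = L w := by
  conv_rhs => rw [← (EuclideanSpace.basisFun (Fin n) ℝ).sum_repr w, map_sum]
  simp only [EuclideanSpace.basisFun_apply, EuclideanSpace.basisFun_repr, map_smul, smul_eq_mul,
    mul_comm]

lemma dvg_smul (hψ : Differentiable ℝ ψ) (hφ : Differentiable ℝ φ) (x : En n) :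
    dvg (fun y => ψ y • φ y) x = ψ x * dvg φ x + fderiv ℝ ψ x (φ x) := by
  simp only [dvg, fderiv_fun_smul (hψ x) (hφ x), add_apply,
    smul_apply, ContinuousLinearMap.smulRight_apply, PiLp.add_apply,
    PiLp.smul_apply, smul_eq_mul, Finset.sum_add_distrib, ← Finset.mul_sum,
    sum_apply_single_mul]

lemma continuous_dvg (hφ : ContDiff ℝ 1 φ) : Continuous (dvg φ) := by
  have := hφ.continuous_fderiv one_ne_zero
  unfold dvg
  fun_prop

lemma hasCompactSupport_dvg (hφ : HasCompactSupport φ) : HasCompactSupport (dvg φ) := by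
  refine (hφ.fderiv (𝕜 := ℝ)).mono (Function.support_subset_iff'.2 fun x hx => ?_)
  simp only [dvg, Function.notMem_support.1 hx, zero_apply, PiLp.zero_apply,
    Finset.sum_const_zero]

/-- The weighted divergence `div (f φ)` of a vector field, in terms of the weak gradient `f'` of
the weight `f`. Its integrals over `E` are the quantities whose supremum is `Per_μ(E)`. -/
def weightedDiv (f : En n → ℝ) (f' φ : En n → En n) (x : En n) : ℝ :=
  f x * dvg φ x + ⟪φ x, f' x⟫

lemma weightedDiv_neg (f : En n → ℝ) (f' φ : En n → En n) (x : En n) :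
    weightedDiv f f' (fun y => -φ y) x = -weightedDiv f f' φ x := by
  simp only [weightedDiv, dvg_neg, inner_neg_left]
  ring

lemma weightedDiv_smul (f : En n → ℝ) (f' : En n → En n) (hψ : Differentiable ℝ ψ)
    (hφ : Differentiable ℝ φ) (x : En n) :
    weightedDiv f f' (fun y => ψ y • φ y) x =
      ψ x * weightedDiv f f' φ x + f x * fderiv ℝ ψ x (φ x) := by
  simp only [weightedDiv, dvg_smul hψ hφ, real_inner_smul_left]
  ring

namespace HasWeakGrad

lemma integrable_mul_dvg (hf : HasWeakGrad f f') (hφ : ContDiff ℝ 1 φ)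
    (hsupp : HasCompactSupport φ) : Integrable fun x => f x * dvg φ x :=
  hf.1.integrable_smul_right_of_hasCompactSupport (continuous_dvg hφ) (hasCompactSupport_dvg hsupp)

lemma integrable_inner (hf : HasWeakGrad f f') (hφ : Continuous φ)
    (hsupp : HasCompactSupport φ) : Integrable fun x => ⟪φ x, f' x⟫ := by
  refine (hf.2.1.integrable_smul_left_of_hasCompactSupport hφ.norm hsupp.norm).mono
    (hφ.aestronglyMeasurable.inner hf.2.1.aestronglyMeasurable) (ae_of_all _ fun x => ?_)
  rw [norm_smul, norm_norm]
  exact norm_inner_le_norm _ _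

lemma integrable_weightedDiv (hf : HasWeakGrad f f') (hφ : ContDiff ℝ 1 φ)
    (hsupp : HasCompactSupport φ) : Integrable (weightedDiv f f' φ) :=
  (hf.integrable_mul_dvg hφ hsupp).add (hf.integrable_inner hφ.continuous hsupp)

lemma integral_weightedDiv (hf : HasWeakGrad f f') (hφ : ContDiff ℝ 1 φ)
    (hsupp : HasCompactSupport φ) : ∫ x, weightedDiv f f' φ x = 0 := by
  simp only [weightedDiv]
  rw [integral_add (hf.integrable_mul_dvg hφ hsupp) (hf.integrable_inner hφ.continuous hsupp),
    hf.2.2 φ hφ hsupp, neg_add_cancel]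

lemma integral_mul_weightedDiv (hf : HasWeakGrad f f') (hψ : ContDiff ℝ 1 ψ) (hφ : ContDiff ℝ 1 φ)
    (hsupp : HasCompactSupport φ) :
    ∫ x, ψ x * weightedDiv f f' φ x = -∫ x, f x * fderiv ℝ ψ x (φ x) := by
  have hsmul : ContDiff ℝ 1 fun x => ψ x • φ x := hψ.smul hφ
  have hsmul_supp : HasCompactSupport fun x => ψ x • φ x := hsupp.smul_left (f := ψ)
  have hgrad_supp : HasCompactSupport fun x => fderiv ℝ ψ x (φ x) :=
    hsupp.mono (Function.support_subset_iff'.2 fun x hx => by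
      rw [Function.notMem_support.1 hx, map_zero])
  have hgrad_cont : Continuous fun x => fderiv ℝ ψ x (φ x) :=
    (hψ.continuous_fderiv one_ne_zero).clm_apply hφ.continuous
  have hgrad : Integrable fun x => f x * fderiv ℝ ψ x (φ x) :=
    hf.1.integrable_smul_right_of_hasCompactSupport hgrad_cont hgrad_supp
  have hleibniz (x : En n) : ψ x * weightedDiv f f' φ x =
      weightedDiv f f' (fun y => ψ y • φ y) x - f x * fderiv ℝ ψ x (φ x) := by
    rw [weightedDiv_smul f f' (hψ.differentiable one_ne_zero) (hφ.differentiable one_ne_zero),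
      add_sub_cancel_right]
  simp only [hleibniz]
  rw [integral_sub (hf.integrable_weightedDiv hsmul hsmul_supp) hgrad,
    hf.integral_weightedDiv hsmul hsmul_supp, zero_sub]

end HasWeakGrad

lemma IsTestField.neg {U : Set (En n)} (hφ : IsTestField U φ) :
    IsTestField U fun x => -φ x := by
  obtain ⟨hsmooth, hsupp, hU, hbound⟩ := hφ
  refine ⟨hsmooth.neg, hsupp.neg, ?_, fun x => (norm_neg _).trans_le (hbound x)⟩
  rwa [tsupport, Function.support_fun_neg]

lemma perim_eq_iSup_setIntegral (f : En n → ℝ) (f' : En n → En n) {E : Set (En n)}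
    (hE : NullMeasurableSet E) :
    perim f f' univ E =
      ⨆ (φ : En n → En n) (_ : IsTestField univ φ),
        ENNReal.ofReal (∫ x in E, weightedDiv f f' φ x) := by
  refine iSup_congr fun φ => iSup_congr fun _ => congrArg ENNReal.ofReal ?_
  rw [Measure.restrict_univ, ← integral_indicator₀ hE]
  refine integral_congr_ae (ae_of_all _ fun x => ?_)
  simp only [indicator, ite_mul, one_mul, zero_mul, weightedDiv]

lemma HasWeakGrad.perim_compl_le (hf : HasWeakGrad f f') {E : Set (En n)}
    (hE : NullMeasurableSet E) : perim f f' univ Eᶜ ≤ perim f f' univ E := by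
  rw [perim_eq_iSup_setIntegral f f' hE, perim_eq_iSup_setIntegral f f' hE.compl]
  refine iSup₂_le fun φ hφ => le_iSup₂_of_le _ hφ.neg (ENNReal.ofReal_le_ofReal ?_)
  have hsum := integral_add_compl₀ hE (hf.integrable_weightedDiv hφ.1 hφ.2.1)
  rw [hf.integral_weightedDiv hφ.1 hφ.2.1] at hsum
  simp only [weightedDiv_neg, integral_neg]
  linarith

lemma HasWeakGrad.perim_compl (hf : HasWeakGrad f f') {E : Set (En n)}
    (hE : NullMeasurableSet E) : perim f f' univ Eᶜ = perim f f' univ E := by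
  refine le_antisymm (hf.perim_compl_le hE) ?_
  simpa only [compl_compl] using hf.perim_compl_le hE.compl

end WeightedDiv

/-! ### The Gauss–Green formula for half-spaces -/

section Mollifier

/-- Bump functions at the origin of the line whose supports shrink to a point. -/
def shrinkingBump (k : ℕ) : ContDiffBump (0 : ℝ) where
  rIn := 1 / (k + 2)
  rOut := 1 / (k + 1)
  rIn_pos := by positivity
  rIn_lt_rOut := by gcongr; norm_num

/-- The approximate identity on the line obtained by normalizing `shrinkingBump`. -/
def mollifier (k : ℕ) : ℝ → ℝ := (shrinkingBump k).normed volume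

/-- The primitive of `mollifier k`: a `C¹` approximation of the indicator of `[0, ∞)`. -/
def smoothStep (k : ℕ) (t : ℝ) : ℝ := ∫ y in Iic t, mollifier k y

lemma tendsto_shrinkingBump_rOut : Tendsto (fun k => (shrinkingBump k).rOut) atTop (𝓝 0) :=
  tendsto_one_div_add_atTop_nhds_zero_nat

lemma mollifier_nonneg (k : ℕ) (t : ℝ) : 0 ≤ mollifier k t :=
  (shrinkingBump k).nonneg_normed t

lemma continuous_mollifier (k : ℕ) : Continuous (mollifier k) :=
  (shrinkingBump k).continuous_normed

lemma integrable_mollifier (k : ℕ) : Integrable (mollifier k) :=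
  (shrinkingBump k).integrable_normed

lemma integral_mollifier (k : ℕ) : ∫ t, mollifier k t = 1 :=
  (shrinkingBump k).integral_normed

lemma hasCompactSupport_mollifier (k : ℕ) : HasCompactSupport (mollifier k) :=
  (shrinkingBump k).hasCompactSupport_normed

lemma mollifier_eq_zero {k : ℕ} {t : ℝ} (ht : (shrinkingBump k).rOut ≤ |t|) :
    mollifier k t = 0 := by
  rw [← Function.notMem_support, mollifier, ContDiffBump.support_normed_eq, mem_ball_zero_iff,
    Real.norm_eq_abs, not_lt]
  exact ht

lemma tendsto_integral_mollifier_mul {g : ℝ → ℝ} (hg : Continuous g) (c : ℝ) :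
    Tendsto (fun k => ∫ t, mollifier k (t - c) * g t) atTop (𝓝 (g c)) := by
  refine (ContDiffBump.convolution_tendsto_right_of_continuous (μ := volume)
    tendsto_shrinkingBump_rOut hg c).congr fun k => ?_
  rw [← integral_sub_left_eq_self (fun t => mollifier k (t - c) * g t) volume c]
  simp only [convolution, ContinuousLinearMap.lsmul_apply, smul_eq_mul, sub_sub_cancel_left,
    mollifier, ContDiffBump.normed_neg]

lemma hasDerivAt_smoothStep (k : ℕ) (t : ℝ) : HasDerivAt (smoothStep k) (mollifier k t) t :=
  hasDerivAt_integral_Iic (integrable_mollifier k) (continuous_mollifier k) t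

lemma contDiff_smoothStep (k : ℕ) : ContDiff ℝ 1 (smoothStep k) := by
  refine contDiff_one_iff_deriv.2 ⟨fun t => (hasDerivAt_smoothStep k t).differentiableAt, ?_⟩
  rw [deriv_eq (hasDerivAt_smoothStep k)]
  exact continuous_mollifier k

lemma smoothStep_nonneg (k : ℕ) (t : ℝ) : 0 ≤ smoothStep k t :=
  integral_nonneg (mollifier_nonneg k)

lemma smoothStep_le_one (k : ℕ) (t : ℝ) : smoothStep k t ≤ 1 :=
  (setIntegral_le_integral (integrable_mollifier k) (ae_of_all _ (mollifier_nonneg k))).trans_eq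
    (integral_mollifier k)

lemma tendsto_smoothStep_of_neg {t : ℝ} (ht : t < 0) :
    Tendsto (fun k => smoothStep k t) atTop (𝓝 0) := by
  refine tendsto_const_nhds.congr' ?_
  filter_upwards [tendsto_shrinkingBump_rOut.eventually_le_const (neg_pos.2 ht)] with k hk
  refine (setIntegral_eq_zero_of_forall_eq_zero fun y hy => mollifier_eq_zero ?_).symm
  exact hk.trans ((neg_le_neg (mem_Iic.1 hy)).trans (neg_le_abs y))

lemma tendsto_smoothStep_of_pos {t : ℝ} (ht : 0 < t) :
    Tendsto (fun k => smoothStep k t) atTop (𝓝 1) := by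
  refine tendsto_const_nhds.congr' ?_
  filter_upwards [tendsto_shrinkingBump_rOut.eventually_le_const ht] with k hk
  rw [← integral_mollifier k]
  refine (setIntegral_eq_integral_of_forall_compl_eq_zero fun y hy => mollifier_eq_zero ?_).symm
  exact hk.trans ((not_le.1 hy).le.trans (le_abs_self y))

end Mollifier

section GaussGreen

variable {n : ℕ} {f : En n → ℝ} {f' φ : En n → En n} {v : En n}

lemma measurableSet_halfSpace (v : En n) (c : ℝ) : MeasurableSet (halfSpace v c) :=
  (isClosed_le continuous_const (continuous_id.inner continuous_const)).measurableSet

lemma ae_inner_ne (hv : v ≠ 0) (c : ℝ) : ∀ᵐ x : En n, ⟪x, v⟫ ≠ c := by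
  have hsurj : Function.Surjective (innerₗ (En n) v) :=
    LinearMap.surjective fun h => hv (inner_self_eq_zero.1 (DFunLike.congr_fun h v))
  simp only [real_inner_comm]
  exact (ae_comp_linearMap_mem_iff _ volume volume hsurj (measurableSet_singleton c).compl).2
    (Measure.ae_ne volume c)

lemma tendsto_smoothStep_inner_sub {x : En n} {c : ℝ} (hx : ⟪x, v⟫ ≠ c) :
    Tendsto (fun k => smoothStep k (⟪x, v⟫ - c)) atTop
      (𝓝 ((halfSpace v c).indicator (fun _ => 1) x)) := by
  rcases hx.lt_or_gt with hlt | hgt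
  · rw [indicator_of_notMem (s := halfSpace v c) (not_le.2 hlt)]
    exact tendsto_smoothStep_of_neg (sub_neg.2 hlt)
  · rw [indicator_of_mem (s := halfSpace v c) hgt.le]
    exact tendsto_smoothStep_of_pos (sub_pos.2 hgt)

lemma fderiv_smoothStep_inner_sub (k : ℕ) (v x w : En n) (c : ℝ) :
    fderiv ℝ (fun y : En n => smoothStep k (⟪y, v⟫ - c)) x w =
      mollifier k (⟪x, v⟫ - c) * ⟪w, v⟫ := by
  have hinner : HasFDerivAt (fun y : En n => ⟪y, v⟫ - c) (innerSL ℝ v) x := by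
    simpa only [innerSL_apply_apply, real_inner_comm] using (innerSL ℝ v).hasFDerivAt.sub_const c
  have hstep : HasFDerivAt (fun y : En n => smoothStep k (⟪y, v⟫ - c)) _ x :=
    (hasDerivAt_smoothStep k _).comp_hasFDerivAt x hinner
  rw [hstep.fderiv, smul_apply, smul_eq_mul, innerSL_apply_apply, real_inner_comm w]

/-- The flux of `f φ` through the hyperplane `⟪x, v⟫ = c`, smeared over a thin slab since `f` need
not have boundary values. -/
def mollifiedFlux (f : En n → ℝ) (φ : En n → En n) (v : En n) (c : ℝ) (k : ℕ) : ℝ :=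
  ∫ x, mollifier k (⟪x, v⟫ - c) * (f x * ⟪φ x, v⟫)

lemma HasWeakGrad.tendsto_mollifiedFlux (hf : HasWeakGrad f f') (hφ : ContDiff ℝ 1 φ)
    (hsupp : HasCompactSupport φ) (hv : v ≠ 0) (c : ℝ) :
    Tendsto (fun k => -mollifiedFlux f φ v c k) atTop
      (𝓝 (∫ x in halfSpace v c, weightedDiv f f' φ x)) := by
  have hinner : ContDiff ℝ 1 fun x : En n => ⟪x, v⟫ - c :=
    (contDiff_id.inner ℝ contDiff_const).sub contDiff_const
  have hstep (k : ℕ) : ContDiff ℝ 1 fun x : En n => smoothStep k (⟪x, v⟫ - c) :=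
    (contDiff_smoothStep k).comp hinner
  have hdiv := hf.integrable_weightedDiv hφ hsupp
  have hflux (k : ℕ) : ∫ x, smoothStep k (⟪x, v⟫ - c) * weightedDiv f f' φ x =
      -mollifiedFlux f φ v c k := by
    rw [hf.integral_mul_weightedDiv (hstep k) hφ hsupp]
    simp only [fderiv_smoothStep_inner_sub, mollifiedFlux, mul_left_comm]
  rw [← integral_indicator (measurableSet_halfSpace v c)]
  refine (tendsto_integral_of_dominated_convergence
    (F := fun k x => smoothStep k (⟪x, v⟫ - c) * weightedDiv f f' φ x)
    (fun x => ‖weightedDiv f f' φ x‖)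
    (fun k => (hstep k).continuous.aestronglyMeasurable.mul hdiv.aestronglyMeasurable) hdiv.norm
    (fun k => ae_of_all _ fun x => ?_) ?_).congr hflux
  · rw [norm_mul, Real.norm_of_nonneg (smoothStep_nonneg _ _)]
    exact mul_le_of_le_one_left (norm_nonneg _) (smoothStep_le_one _ _)
  · filter_upwards [ae_inner_ne hv c] with x hx
    have hlim := (tendsto_smoothStep_inner_sub hx).mul_const (weightedDiv f f' φ x)
    simpa only [indicator, ite_mul, one_mul, zero_mul] using hlim

end GaussGreen

/-! ### Perimeters of half-spaces for product densities -/

section ProdDensity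

variable {n : ℕ} {f' : En n → En n} {F : Fin n → ℝ → ℝ}

/-- The density `f(x) = F₁(x₁) ⋯ Fₙ(xₙ)`. -/
def prodDensity (F : Fin n → ℝ → ℝ) (x : En n) : ℝ := ∏ j, F j (x j)

/-- The product of the masses of all factors but the `i`-th, that is, the integral of
`∏ j ≠ i, F j (x j)` over a hyperplane `x i = c`. -/
def hyperplaneMass (F : Fin n → ℝ → ℝ) (i : Fin n) : ℝ := ∏ j ∈ Finset.univ.erase i, ∫ t, F j t

lemma prodDensity_nonneg (hnonneg : ∀ j t, 0 ≤ F j t) (x : En n) : 0 ≤ prodDensity F x :=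
  Finset.prod_nonneg fun j _ => hnonneg j _

lemma prodDensity_pos (hpos : ∀ j t, 0 < F j t) (x : En n) : 0 < prodDensity F x :=
  Finset.prod_pos fun j _ => hpos j _

lemma prodDensity_mul (F G : Fin n → ℝ → ℝ) (x : En n) :
    prodDensity F x * prodDensity G x = prodDensity (fun j t => F j t * G j t) x :=
  Finset.prod_mul_distrib.symm

lemma coord_mul_prodDensity (F : Fin n → ℝ → ℝ) (i : Fin n) (ρ : ℝ → ℝ) (x : En n) :
    ρ (x i) * prodDensity F x =
      prodDensity (fun j t => (if j = i then ρ t else 1) * F j t) x := by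
  simp only [prodDensity, Finset.prod_mul_distrib, Finset.prod_ite_eq', Finset.mem_univ, if_true]

lemma integral_prodDensity (F : Fin n → ℝ → ℝ) :
    ∫ x, prodDensity F x = ∏ j, ∫ t, F j t := by
  rw [← integral_fintype_prod_volume_eq_prod]
  exact (PiLp.volume_preserving_ofLp (Fin n)).integral_comp
    (MeasurableEquiv.toLp 2 (Fin n → ℝ)).symm.measurableEmbedding fun y => ∏ j, F j (y j)

lemma integrable_prodDensity (hint : ∀ j, Integrable (F j)) : Integrable (prodDensity F) :=
  ((PiLp.volume_preserving_ofLp (Fin n)).integrable_comp_emb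
    (MeasurableEquiv.toLp 2 (Fin n → ℝ)).symm.measurableEmbedding
    (g := fun y => ∏ j, F j (y j))).2 (Integrable.fintype_prod hint)

lemma integral_coord_mul_prodDensity (F : Fin n → ℝ → ℝ) (i : Fin n) (ρ : ℝ → ℝ) :
    ∫ x : En n, ρ (x i) * prodDensity F x = (∫ t, ρ t * F i t) * hyperplaneMass F i := by
  simp only [coord_mul_prodDensity]
  rw [integral_prodDensity, ← Finset.mul_prod_erase _ _ (Finset.mem_univ i)]
  simp only [if_true]
  refine congrArg _ (Finset.prod_congr rfl fun j hj => ?_)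
  simp only [if_neg (Finset.ne_of_mem_erase hj), one_mul]

lemma integrable_coord_mul_prodDensity (hint : ∀ j, Integrable (F j)) {i : Fin n} {ρ : ℝ → ℝ}
    (hρ : Integrable fun t => ρ t * F i t) :
    Integrable fun x : En n => ρ (x i) * prodDensity F x := by
  simp only [coord_mul_prodDensity]
  refine integrable_prodDensity fun j => ?_
  obtain rfl | hj := eq_or_ne j i
  · simpa only [if_true] using hρ
  · simpa only [if_neg hj, one_mul] using hint j

lemma integrable_factor (hint : Integrable (prodDensity F)) (hpos : ∀ j t, 0 < F j t) (j : Fin n) :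
    Integrable (F j) := by
  have hmass := integral_pos_of_forall_pos hint (prodDensity_pos hpos)
  rw [integral_prodDensity] at hmass
  exact .of_integral_ne_zero (Finset.prod_ne_zero_iff.1 hmass.ne' j (Finset.mem_univ j))

lemma hyperplaneMass_pos (hint : ∀ j, Integrable (F j)) (hpos : ∀ j t, 0 < F j t) (i : Fin n) :
    0 < hyperplaneMass F i :=
  Finset.prod_pos fun j _ => integral_pos_of_forall_pos (hint j) (hpos j)

lemma inner_single_one (x : En n) (i : Fin n) : ⟪x, EuclideanSpace.single i 1⟫ = x i := by
  rw [EuclideanSpace.inner_single_right, conj_trivial, one_mul]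

lemma mollifiedFlux_single (f : En n → ℝ) (φ : En n → En n) (i : Fin n) (c : ℝ) (k : ℕ) :
    mollifiedFlux f φ (EuclideanSpace.single i 1) c k =
      ∫ x, mollifier k (x i - c) * (f x * φ x i) := by
  simp only [mollifiedFlux, inner_single_one]

lemma neg_mollifiedFlux_prodDensity_le {φ : En n → En n} (hint : ∀ j, Integrable (F j))
    (hnonneg : ∀ j t, 0 ≤ F j t) (hφ : ∀ x, ‖φ x‖ ≤ 1) (i : Fin n) (c : ℝ) (k : ℕ) :
    -mollifiedFlux (prodDensity F) φ (EuclideanSpace.single i 1) c k ≤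
      (∫ t, mollifier k (t - c) * F i t) * hyperplaneMass F i := by
  have hmoll : Integrable fun t => mollifier k (t - c) * F i t :=
    (hint i).locallyIntegrable.integrable_smul_left_of_hasCompactSupport
      ((continuous_mollifier k).comp (continuous_sub_right c))
      ((hasCompactSupport_mollifier k).comp_homeomorph (Homeomorph.subRight c))
  rw [mollifiedFlux_single, ← integral_coord_mul_prodDensity F i fun t => mollifier k (t - c)]
  refine (neg_le_abs _).trans ((Real.norm_eq_abs _).symm.trans_le (norm_integral_le_of_norm_le
    (integrable_coord_mul_prodDensity hint hmoll) (ae_of_all _ fun x => ?_)))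
  have hF := prodDensity_nonneg hnonneg x
  rw [norm_mul, norm_mul, Real.norm_of_nonneg (mollifier_nonneg _ _), Real.norm_of_nonneg hF]
  refine mul_le_mul_of_nonneg_left ?_ (mollifier_nonneg _ _)
  exact mul_le_of_le_one_right hF ((PiLp.norm_apply_le (φ x) i).trans (hφ x))

lemma perim_halfSpace_single_le (hW : HasWeakGrad (prodDensity F) f')
    (hcont : ∀ j, Continuous (F j)) (hint : ∀ j, Integrable (F j)) (hnonneg : ∀ j t, 0 ≤ F j t)
    (i : Fin n) (c : ℝ) :
    perim (prodDensity F) f' univ (halfSpace (EuclideanSpace.single i 1) c) ≤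
      ENNReal.ofReal (F i c * hyperplaneMass F i) := by
  rw [perim_eq_iSup_setIntegral _ _ (measurableSet_halfSpace _ c).nullMeasurableSet]
  refine iSup₂_le fun φ hφ => ENNReal.ofReal_le_ofReal ?_
  exact le_of_tendsto_of_tendsto'
    (hW.tendsto_mollifiedFlux hφ.1 hφ.2.1 (by simp) c)
    ((tendsto_integral_mollifier_mul (hcont i) c).mul_const _)
    (neg_mollifiedFlux_prodDensity_le hint hnonneg hφ.2.2.2 i c)

/-- A smooth cutoff on the line, equal to `1` on `[-(k+1), k+1]`. -/
def lineCutoff (k : ℕ) : ContDiffBump (0 : ℝ) where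
  rIn := k + 1
  rOut := k + 2
  rIn_pos := by positivity
  rIn_lt_rOut := by linarith

/-- The constant field `w`, cut off smoothly outside a large cube. -/
def boxField (k : ℕ) (w x : En n) : En n := prodDensity (fun _ => lineCutoff k) x • w

lemma norm_lineCutoff_le_one (k : ℕ) (t : ℝ) : ‖lineCutoff k t‖ ≤ 1 := by
  rw [Real.norm_of_nonneg (lineCutoff k).nonneg]
  exact (lineCutoff k).le_one

lemma tendsto_lineCutoff (t : ℝ) : Tendsto (fun k => lineCutoff k t) atTop (𝓝 1) := by
  refine tendsto_const_nhds.congr' ?_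
  filter_upwards [tendsto_natCast_atTop_atTop.eventually_ge_atTop |t|] with k hk
  refine ((lineCutoff k).one_of_mem_closedBall ?_).symm
  rw [mem_closedBall_zero_iff]
  exact hk.trans (le_add_of_nonneg_right zero_le_one)

lemma hasCompactSupport_prodDensity {r : ℝ} (hF : ∀ j t, r ≤ ‖t‖ → F j t = 0) :
    HasCompactSupport (prodDensity F) := by
  refine HasCompactSupport.intro
    ((EuclideanSpace.equiv (Fin n) ℝ).toHomeomorph.isCompact_preimage.2
      (isCompact_univ_pi fun _ => isCompact_closedBall (0 : ℝ) r)) fun x hx => ?_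
  obtain ⟨j, hj⟩ : ∃ j, x j ∉ Metric.closedBall 0 r := by
    by_contra! hmem
    exact hx fun j _ => hmem j
  rw [mem_closedBall_zero_iff, not_le] at hj
  exact Finset.prod_eq_zero (Finset.mem_univ j) (hF j _ hj.le)

lemma isTestField_boxField (k : ℕ) {w : En n} (hw : ‖w‖ ≤ 1) :
    IsTestField univ (boxField k w) := by
  have hcutoff : ContDiff ℝ 1 (prodDensity fun _ : Fin n => lineCutoff k) :=
    contDiff_prod fun j _ => (lineCutoff k).contDiff.comp (by fun_prop)
  have hsupp : HasCompactSupport (prodDensity fun _ : Fin n => lineCutoff k) :=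
    hasCompactSupport_prodDensity (r := k + 2) fun _ t ht =>
      (lineCutoff k).zero_of_le_dist (by rwa [dist_zero_right])
  refine ⟨hcutoff.smul contDiff_const, hsupp.smul_right (f' := fun _ => w), subset_univ _,
    fun x => ?_⟩
  rw [boxField, norm_smul, prodDensity, norm_prod]
  exact mul_le_one₀ (Finset.prod_le_one (fun _ _ => norm_nonneg _)
    fun _ _ => norm_lineCutoff_le_one k _) (norm_nonneg _) hw

lemma mollifiedFlux_prodDensity_boxField (F : Fin n → ℝ → ℝ) (i : Fin n) (c : ℝ) (k m : ℕ) :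
    -mollifiedFlux (prodDensity F) (boxField k (EuclideanSpace.single i (-1)))
        (EuclideanSpace.single i 1) c m =
      (∫ t, mollifier m (t - c) * (lineCutoff k t * F i t)) *
        hyperplaneMass (fun j t => lineCutoff k t * F j t) i := by
  rw [mollifiedFlux_single, ← integral_neg,
    ← integral_coord_mul_prodDensity (fun j t => lineCutoff k t * F j t) i
      fun t => mollifier m (t - c)]
  refine integral_congr_ae (ae_of_all _ fun x => ?_)
  simp only [boxField, PiLp.smul_apply, PiLp.single_apply, if_true, smul_eq_mul, ← prodDensity_mul]
  ring

/-- The field pointing out of the half-space has the largest flux through its boundary. -/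
lemma setIntegral_weightedDiv_boxField (hW : HasWeakGrad (prodDensity F) f')
    (hcont : ∀ j, Continuous (F j)) (i : Fin n) (c : ℝ) (k : ℕ) :
    ∫ x in halfSpace (EuclideanSpace.single i 1) c,
        weightedDiv (prodDensity F) f' (boxField k (EuclideanSpace.single i (-1))) x =
      lineCutoff k c * F i c * hyperplaneMass (fun j t => lineCutoff k t * F j t) i := by
  have htest := isTestField_boxField (n := n) k (w := EuclideanSpace.single i (-1)) (by simp)
  refine tendsto_nhds_unique
    (hW.tendsto_mollifiedFlux htest.1 htest.2.1 (by simp) c) ?_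
  simp only [mollifiedFlux_prodDensity_boxField]
  exact (tendsto_integral_mollifier_mul
    ((lineCutoff k).continuous.mul (hcont i)) c).mul_const _

lemma tendsto_hyperplaneMass_lineCutoff_mul (hint : ∀ j, Integrable (F j)) (i : Fin n) :
    Tendsto (fun k => hyperplaneMass (fun j t => lineCutoff k t * F j t) i) atTop
      (𝓝 (hyperplaneMass F i)) := by
  refine tendsto_finsetProd _ fun j _ => ?_
  refine tendsto_integral_of_dominated_convergence (fun t => ‖F j t‖)
    (fun k => (lineCutoff k).continuous.aestronglyMeasurable.mul (hint j).aestronglyMeasurable)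
    (hint j).norm (fun k => ae_of_all _ fun t => ?_) (ae_of_all _ fun t => ?_)
  · exact (norm_mul _ _).trans_le
      (mul_le_of_le_one_left (norm_nonneg _) (norm_lineCutoff_le_one k t))
  · simpa only [one_mul] using (tendsto_lineCutoff t).mul_const (F j t)

lemma le_perim_halfSpace_single (hW : HasWeakGrad (prodDensity F) f')
    (hcont : ∀ j, Continuous (F j)) (hint : ∀ j, Integrable (F j)) (i : Fin n) (c : ℝ) :
    ENNReal.ofReal (F i c * hyperplaneMass F i) ≤
      perim (prodDensity F) f' univ (halfSpace (EuclideanSpace.single i 1) c) := by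
  have hlim := ((tendsto_lineCutoff c).mul_const (F i c)).mul
    (tendsto_hyperplaneMass_lineCutoff_mul hint i)
  rw [one_mul] at hlim
  refine le_of_tendsto (ENNReal.tendsto_ofReal hlim) (Eventually.of_forall fun k => ?_)
  rw [← setIntegral_weightedDiv_boxField hW hcont,
    perim_eq_iSup_setIntegral _ _ (measurableSet_halfSpace _ c).nullMeasurableSet]
  exact le_iSup₂_of_le _ (isTestField_boxField k (by simp)) le_rfl

theorem perim_halfSpace_single (hW : HasWeakGrad (prodDensity F) f')
    (hcont : ∀ j, Continuous (F j)) (hint : ∀ j, Integrable (F j)) (hnonneg : ∀ j t, 0 ≤ F j t)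
    (i : Fin n) (c : ℝ) :
    perim (prodDensity F) f' univ (halfSpace (EuclideanSpace.single i 1) c) =
      ENNReal.ofReal (F i c * hyperplaneMass F i) :=
  le_antisymm (perim_halfSpace_single_le hW hcont hint hnonneg i c)
    (le_perim_halfSpace_single hW hcont hint i c)

/-! ### Symmetrizing half-spaces -/

lemma ehrhard1D_one_eq_Ici {ν : Measure ℝ} {A : Set ℝ} {c : ℝ}
    (h : ∀ b, ν (Ici b) ≤ ν A ↔ c ≤ b) : ehrhard1D ν 1 A = Ici c := by
  ext t
  have hIci (b : ℝ) : {y : ℝ | b ≤ y} = Ici b := rfl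
  simp only [ehrhard1D, one_mul, hIci, h, mem_ofPred_eq, mem_Ici]
  exact ⟨fun ht => ht c fun _ => id, fun ht b hb => (hb c le_rfl).trans ht⟩

lemma ehrhard1D_smul {κ : ℝ≥0∞} (hκ : κ ≠ 0) (hκ_top : κ ≠ ∞) (ν : Measure ℝ) (v : ℝ)
    (A : Set ℝ) : ehrhard1D (κ • ν) v A = ehrhard1D ν v A := by
  simp only [ehrhard1D, Measure.smul_apply, smul_eq_mul, ENNReal.mul_le_mul_iff_right hκ hκ_top]

lemma ehrhard1D_withDensity_Iio {g : ℝ → ℝ} (hint : Integrable g) (hpos : ∀ t, 0 < g t) {c c' : ℝ}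
    (htail : ∫ t in Iic c, g t = ∫ t in Ioi c', g t) :
    ehrhard1D (volume.withDensity fun t => ENNReal.ofReal (g t)) 1 (Iio c) = Ici c' := by
  have hmeasure {s : Set ℝ} (hs : MeasurableSet s) :
      (volume.withDensity fun t => ENNReal.ofReal (g t)) s = ENNReal.ofReal (∫ t in s, g t) := by
    rw [withDensity_apply _ hs, ofReal_integral_eq_lintegral_ofReal hint.integrableOn
      (ae_of_all _ fun t => (hpos t).le)]
  refine ehrhard1D_one_eq_Ici fun b => ?_
  rw [hmeasure measurableSet_Ici, hmeasure measurableSet_Iio, ← integral_Iic_eq_integral_Iio,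
    integral_Ici_eq_integral_Ioi, htail,
    ENNReal.ofReal_le_ofReal_iff (setIntegral_nonneg measurableSet_Ioi fun t _ => (hpos t).le),
    integral_Ioi_le_integral_Ioi_iff hint hpos]

lemma sub_inner_smul_add_smul_single_apply (z : En n) (i j : Fin n) (t : ℝ) :
    (z - ⟪z, EuclideanSpace.single i 1⟫ • EuclideanSpace.single i 1 +
      t • EuclideanSpace.single i 1 : En n) j = if j = i then t else z j := by
  rw [inner_single_one]
  obtain rfl | hj := eq_or_ne j i
  · simp
  · simp [hj]

lemma fiberMeasure_prodDensity (hnonneg : ∀ j t, 0 ≤ F j t) (i : Fin n) (z : En n) :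
    fiberMeasure (prodDensity F)
        (z - ⟪z, EuclideanSpace.single i 1⟫ • EuclideanSpace.single i 1)
        (EuclideanSpace.single i 1) =
      ENNReal.ofReal (∏ j ∈ Finset.univ.erase i, F j (z j)) •
        volume.withDensity fun t => ENNReal.ofReal (F i t) := by
  have hprod (t : ℝ) : prodDensity F (z - ⟪z, EuclideanSpace.single i 1⟫ •
      EuclideanSpace.single i 1 + t • EuclideanSpace.single i 1) =
        (∏ j ∈ Finset.univ.erase i, F j (z j)) * F i t := by
    simp only [prodDensity, sub_inner_smul_add_smul_single_apply]
    rw [← Finset.prod_erase_mul _ _ (Finset.mem_univ i)]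
    simp only [if_true]
    exact congrArg (· * _) (Finset.prod_congr rfl fun j hj => by
      rw [if_neg (Finset.ne_of_mem_erase hj)])
  rw [← withDensity_smul' _ _ ENNReal.ofReal_ne_top, fiberMeasure]
  congr with t
  rw [hprod, ENNReal.ofReal_mul (Finset.prod_nonneg fun j _ => hnonneg j _), Pi.smul_apply,
    smul_eq_mul]

lemma ehrhardSymm_prodDensity (hint : ∀ j, Integrable (F j)) (hpos : ∀ j t, 0 < F j t) (i : Fin n)
    {c c' : ℝ} (htail : ∫ t in Iic c, F i t = ∫ t in Ioi c', F i t) :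
    ehrhardSymm (prodDensity F) (EuclideanSpace.single i 1)
        (halfSpace (EuclideanSpace.single i 1) c)ᶜ =
      halfSpace (EuclideanSpace.single i 1) c' := by
  ext z
  have hfiber : {t : ℝ | z - ⟪z, EuclideanSpace.single i 1⟫ • EuclideanSpace.single i 1 +
      t • EuclideanSpace.single i 1 ∈ (halfSpace (EuclideanSpace.single i 1) c)ᶜ} = Iio c := by
    ext t
    simp only [halfSpace, mem_compl_iff, mem_ofPred_eq, inner_single_one _ i, mem_Iio, not_le]
    rw [← inner_single_one z i, sub_inner_smul_add_smul_single_apply, if_pos rfl]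
  have hκ : ENNReal.ofReal (∏ j ∈ Finset.univ.erase i, F j (z j)) ≠ 0 :=
    (ENNReal.ofReal_pos.2 (Finset.prod_pos fun j _ => hpos j _)).ne'
  rw [ehrhardSymm, mem_ofPred_eq, hfiber, fiberMeasure_prodDensity (fun j t => (hpos j t).le),
    ehrhard1D_smul hκ ENNReal.ofReal_ne_top, ehrhard1D_withDensity_Iio (hint i) (hpos i) htail]
  rfl

lemma IsPSMeasure.factor_le_of_tail_eq (hPS : IsPSMeasure (prodDensity F) f')
    (hW : HasWeakGrad (prodDensity F) f') (hcont : ∀ j, Continuous (F j))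
    (hint : ∀ j, Integrable (F j)) (hpos : ∀ j t, 0 < F j t) (i : Fin n) {c c' : ℝ}
    (htail : ∫ t in Iic c, F i t = ∫ t in Ioi c', F i t) : F i c' ≤ F i c := by
  have hmeas := (measurableSet_halfSpace (EuclideanSpace.single i 1 : En n) c).nullMeasurableSet
    (μ := volume)
  have hperim := perim_halfSpace_single hW hcont hint (fun j t => (hpos j t).le) i
  have hsymm := hPS (EuclideanSpace.single i 1) (by simp) _ hmeas.compl
  rw [hW.perim_compl hmeas, ehrhardSymm_prodDensity hint hpos i htail, hperim, hperim] at hsymm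
  have hmass := hyperplaneMass_pos hint hpos i
  exact le_of_mul_le_mul_right ((ENNReal.ofReal_le_ofReal_iff
    (mul_pos (hpos i c) hmass).le).1 (hsymm ENNReal.ofReal_lt_top)) hmass

theorem IsPSMeasure.exists_forall_factor_symm (hPS : IsPSMeasure (prodDensity F) f')
    (hW : HasWeakGrad (prodDensity F) f') (hcont : ∀ j, Continuous (F j))
    (hint : ∀ j, Integrable (F j)) (hpos : ∀ j t, 0 < F j t) :
    ∃ m : En n, ∀ i t, F i (-t + m i) = F i (t + m i) := by
  choose m hm using fun i => exists_symm_of_tail_balanced (hint i) (hcont i) (hpos i)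
    fun c c' => hPS.factor_le_of_tail_eq hW hcont hint hpos i
  exact ⟨WithLp.toLp 2 m, hm⟩

end ProdDensity

theorem ps_measure_translation_general {n : ℕ} {f : En n → ℝ} {f' : En n → En n}
    (hW : MemW f f') (hPS : IsPSMeasure f f') (a : En n) :
    IsPSMeasure (fun x => f (x + a)) (fun x => f' (x + a)) ∧
    (∀ F : Fin n → ℝ → ℝ, (∀ i, Continuous (F i)) → (∀ i t, 0 < F i t) →
      (∀ x : En n, f x = ∏ i, F i (x i)) →
      ∃ m : En n, IsPSMeasure (fun x => f (x + m)) (fun x => f' (x + m)) ∧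
        ∃ G : Fin n → ℝ → ℝ,
          (∀ x : En n, f (x + m) = ∏ i, G i (x i)) ∧
          ∀ i, Continuous (G i) ∧ (∀ t, 0 < G i t) ∧ ∀ t : ℝ, G i (-t) = G i t) := by
  refine ⟨hPS.translate a, fun F hcont hpos hprod => ?_⟩
  obtain rfl : f = prodDensity F := funext hprod
  have hint := integrable_factor hW.2.1 hpos
  obtain ⟨m, hsymm⟩ := hPS.exists_forall_factor_symm hW.2.2 hcont hint hpos
  exact ⟨m, hPS.translate m, fun i t => F i (t + m i), fun _ => rfl, fun i =>
    ⟨(hcont i).comp (continuous_add_const _), fun _ => hpos i _, hsymm i⟩⟩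

/-- Translating a PS measure with continuous positive density yields a PS measure;
moreover a PS measure with a product density can be translated so that every factor
is even. -/
theorem ps_measure_translation {n : ℕ} (f : En n → ℝ) (f' : En n → En n)
    (hW : MemW f f') (hPS : IsPSMeasure f f')
    (hcont : Continuous f) (hpos : ∀ x, 0 < f x) (a : En n) :
    IsPSMeasure (fun x => f (x + a)) (fun x => f' (x + a)) ∧
    (∀ F : Fin n → ℝ → ℝ, (∀ i, Continuous (F i)) → (∀ i t, 0 < F i t) →
      (∀ x : En n, f x = ∏ i, F i (x i)) →
      ∃ m : En n, IsPSMeasure (fun x => f (x + m)) (fun x => f' (x + m)) ∧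
        ∃ G : Fin n → ℝ → ℝ,
          (∀ x : En n, f (x + m) = ∏ i, G i (x i)) ∧
          ∀ i, Continuous (G i) ∧ (∀ t, 0 < G i t) ∧ ∀ t : ℝ, G i (-t) = G i t) :=
  ps_measure_translation_general hW hPS a

end
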